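/- arXiv:1010.5506 — 6 statements merged into one kernel-verified Lean document; each statement's English description precedes it below -/
import Mathlib

section
/- (MacWilliams identity for EAQEC codes, coefficient form.) Let n ≥ 1 and let W be an F₂-linear subspace of V_n. For 0 ≤ w ≤ n let A_w be the number of elements of W of Pauli weight w and B_w the number of elements of W^⊥ of Pauli weight w. Then for every w with 0 ≤ w ≤ n, |W| · B_w = Σ_{w'=0}^{n} P_w(w',n) · A_{w'}, where P_w(w',n) = Σ_{u=0}^{w} (−1)^u 3^{w−u} C(w',u) C(n−w', w−u) is the Krawtchouk polynomial. -/
open Finset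

/-- The binary symplectic space modelling `n`-qubit Pauli operators modulo phases. -/
abbrev V (n : ℕ) := (Fin n → ZMod 2) × (Fin n → ZMod 2)

/-- The Pauli weight of `v = (x, z)`: the number of indices where `(x i, z i) ≠ (0,0)`. -/
def wt {n : ℕ} (v : V n) : ℕ :=
  (Finset.univ.filter fun i => ¬(v.1 i = 0 ∧ v.2 i = 0)).card

/-- The binary symplectic product. -/
def sympl {n : ℕ} (u v : V n) : ZMod 2 :=
  ∑ i, (u.1 i * v.2 i + u.2 i * v.1 i)

lemma sympl_add_left {n : ℕ} (a b w : V n) :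
    sympl (a + b) w = sympl a w + sympl b w := by
  simp only [sympl, Prod.fst_add, Prod.snd_add, Pi.add_apply, ← Finset.sum_add_distrib]
  exact Finset.sum_congr rfl fun i _ => by ring

lemma sympl_smul_left {n : ℕ} (c : ZMod 2) (a w : V n) :
    sympl (c • a) w = c * sympl a w := by
  simp only [sympl, Prod.smul_fst, Prod.smul_snd, Pi.smul_apply, smul_eq_mul,
    Finset.mul_sum]
  exact Finset.sum_congr rfl fun i _ => by ring

/-- The symplectic dual `W^⊥` of a subspace `W ⊆ V n`. -/
def sdual {n : ℕ} (W : Submodule (ZMod 2) (V n)) : Submodule (ZMod 2) (V n) where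
  carrier := {u | ∀ w ∈ W, sympl u w = 0}
  add_mem' := fun ha hb w hw => by
    rw [sympl_add_left, ha w hw, hb w hw, add_zero]
  zero_mem' := fun w hw => by simp [sympl]
  smul_mem' := fun c a ha w hw => by rw [sympl_smul_left, ha w hw, mul_zero]

open scoped Classical

/-- The Krawtchouk polynomial `P_w(w', n)`. -/
def kraw (n w w' : ℕ) : ℤ :=
  ∑ u ∈ Finset.range (w + 1),
    (-1 : ℤ) ^ u * 3 ^ (w - u) * (w'.choose u) * ((n - w').choose (w - u))

/-! The commutation signs `(-1) ^ λ(v, m)` are characters of `V n`. Orthogonality says that summing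
them over `m ∈ W` gives `|W|` times the indicator of `v ∈ W^⊥`, so `|W|` times the weight enumerator
of `W^⊥` is a double sum over `v ∈ V n` and `m ∈ W`. For fixed `m`, both the sign and the weight
monomial factor over the qubits; a qubit on which `m` is trivial contributes `x + 3 * y`, and any
other qubit contributes `x - y`, because a nontrivial Pauli operator commutes with two and
anticommutes with two of the four. Setting `x = 1`, `y = X` and comparing coefficients gives the
Krawtchouk form. -/

section FiniteSums

lemma sum_mem_addChar_eq_ite {A S R : Type*} [AddGroup A] [Fintype A] [SetLike S A]
    [AddSubgroupClass S A] [CommSemiring R] [IsDomain R] (H : S) [DecidablePred (· ∈ H)]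
    (ψ : AddChar A R) [Decidable (∀ a ∈ H, ψ a = 1)] :
    ∑ a with a ∈ H, ψ a = if ∀ a ∈ H, ψ a = 1 then (#{a | a ∈ H} : R) else 0 := by
  have restrict_eq_zero : ψ.compAddMonoidHom (AddSubgroupClass.subtype H) = 0 ↔
      ∀ a ∈ H, ψ a = 1 := by
    simp [AddChar.ext_iff]
  rw [← sum_subtype_eq_sum_filter, subtype_univ, ← Fintype.card_subtype]
  exact (ψ.compAddMonoidHom (AddSubgroupClass.subtype H)).sum_eq_ite.trans
    (if_congr restrict_eq_zero rfl rfl)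

lemma addChar_sum_eq_prod {ι A M : Type*} [AddCommMonoid A] [CommMonoid M] (ψ : AddChar A M)
    (s : Finset ι) (f : ι → A) : ψ (∑ i ∈ s, f i) = ∏ i ∈ s, ψ (f i) :=
  map_prod ψ.toMonoidHom (fun i => Multiplicative.ofAdd (f i)) s

lemma sum_prod_arrow_prod_arrow {ι α β R : Type*} [Fintype ι] [DecidableEq ι] [Fintype α]
    [Fintype β] [CommSemiring R] (f : ι → α → β → R) :
    ∑ v : (ι → α) × (ι → β), ∏ i, f i (v.1 i) (v.2 i) = ∏ i, ∑ a, ∑ b, f i a b := by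
  simp only [← Fintype.sum_prod_type', Fintype.prod_sum]
  exact ((Equiv.arrowProdEquivProdArrow ι (fun _ => α) fun _ => β).sum_comp
    fun v => ∏ i, f i (v.1 i) (v.2 i)).symm

end FiniteSums

section CommutationSign

variable {n : ℕ}

lemma sympl_comm (u v : V n) : sympl u v = sympl v u := by
  simp only [sympl]
  exact sum_congr rfl fun i _ => by ring

/-- The nontrivial additive character `a ↦ (-1) ^ a` of `ZMod 2`. -/
def signChar : AddChar (ZMod 2) ℤ := AddChar.zmodChar 2 neg_one_sq

lemma signChar_one : signChar 1 = -1 := rfl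

lemma signChar_eq_one_iff {a : ZMod 2} : signChar a = 1 ↔ a = 0 := by
  revert a; decide

/-- The sign `(-1) ^ λ(m, v)` by which the Pauli operators of `v` and `m` commute, as an additive
character of the variable `m`. -/
def commSign (v : V n) : AddChar (V n) ℤ where
  toFun m := signChar (sympl m v)
  map_zero_eq_one' := by simp [sympl]
  map_add_eq_mul' a b := by rw [sympl_add_left, AddChar.map_add_eq_mul]

lemma commSign_eq_prod (v m : V n) :
    commSign v m = ∏ i, signChar (m.1 i * v.2 i + m.2 i * v.1 i) :=
  addChar_sum_eq_prod signChar _ _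

lemma mem_sdual_iff_commSign_eq_one {W : Submodule (ZMod 2) (V n)} {v : V n} :
    v ∈ sdual W ↔ ∀ m ∈ W, commSign v m = 1 := by
  change (∀ m ∈ W, sympl v m = 0) ↔ ∀ m ∈ W, signChar (sympl m v) = 1
  simp only [signChar_eq_one_iff, sympl_comm v]

lemma sum_mem_commSign (W : Submodule (ZMod 2) (V n)) (v : V n) :
    ∑ m with m ∈ W, commSign v m = if v ∈ sdual W then (#{m | m ∈ W} : ℤ) else 0 := by
  simp only [mem_sdual_iff_commSign_eq_one, sum_mem_addChar_eq_ite]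

end CommutationSign

section WeightEnumerator

variable {n : ℕ} {R : Type*}

lemma wt_le (v : V n) : wt v ≤ n :=
  card_finset_fin_le _

lemma pow_sub_wt_mul_pow_wt [CommMonoid R] (x y : R) (v : V n) :
    x ^ (n - wt v) * y ^ wt v = ∏ i, if v.1 i = 0 ∧ v.2 i = 0 then x else y := by
  have card_trivial : #{i | v.1 i = 0 ∧ v.2 i = 0} = n - wt v := by
    have := card_filter_add_card_filter_not (s := univ) fun i => v.1 i = 0 ∧ v.2 i = 0
    rw [card_univ, Fintype.card_fin] at this
    exact Nat.eq_sub_of_add_eq this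
  rw [prod_ite, prod_const, prod_const, card_trivial, wt]

/-- The homogeneous weight enumerator `∑ v ∈ S, x ^ (n - wt v) * y ^ wt v` of a set `S` of Pauli
operators, evaluated at elements `x` and `y` of a semiring. -/
def weightEnum [CommSemiring R] (S : Finset (V n)) (x y : R) : R :=
  ∑ v ∈ S, x ^ (n - wt v) * y ^ wt v

lemma weightEnum_eq_sum_range [CommSemiring R] (S : Finset (V n)) (x y : R) :
    weightEnum S x y = ∑ k ∈ range (n + 1), (#{v ∈ S | wt v = k} : R) * (x ^ (n - k) * y ^ k) := by
  rw [weightEnum, ← sum_fiberwise_of_maps_to' (t := range (n + 1)) (g := wt)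
    (fun v _ => mem_range_succ_iff.2 (wt_le v)) fun k => x ^ (n - k) * y ^ k]
  simp only [sum_const, nsmul_eq_mul]

lemma sum_signChar_mul_ite [CommRing R] (x y : R) (a b : ZMod 2) :
    ∑ c, ∑ d, (signChar (a * d + b * c) : R) * (if c = 0 ∧ d = 0 then x else y) =
      if a = 0 ∧ b = 0 then x + 3 * y else x - y := by
  have sum_zmod_two (f : ZMod 2 → R) : ∑ c, f c = f 0 + f 1 := Fin.sum_univ_two f
  have eq_zero_or_eq_one : ∀ c : ZMod 2, c = 0 ∨ c = 1 := by decide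
  simp only [sum_zmod_two]
  rcases eq_zero_or_eq_one a with rfl | rfl <;> rcases eq_zero_or_eq_one b with rfl | rfl <;>
    simp [signChar_one, CharTwo.add_self_eq_zero] <;> ring

lemma sum_commSign_mul_pow_wt [CommRing R] (x y : R) (m : V n) :
    ∑ v : V n, (commSign v m : R) * (x ^ (n - wt v) * y ^ wt v) =
      (x + 3 * y) ^ (n - wt m) * (x - y) ^ wt m := by
  simp only [commSign_eq_prod, pow_sub_wt_mul_pow_wt, Int.cast_prod, ← prod_mul_distrib]
  rw [sum_prod_arrow_prod_arrow fun i c d =>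
    (signChar (m.1 i * d + m.2 i * c) : R) * if c = 0 ∧ d = 0 then x else y]
  simp only [sum_signChar_mul_ite]

theorem card_mul_weightEnum_sdual [CommRing R] (W : Submodule (ZMod 2) (V n)) (x y : R) :
    (#{m | m ∈ W} : R) * weightEnum {v | v ∈ sdual W} x y =
      weightEnum {m | m ∈ W} (x + 3 * y) (x - y) := by
  calc (#{m | m ∈ W} : R) * weightEnum {v | v ∈ sdual W} x y
    _ = ∑ v, ((∑ m with m ∈ W, commSign v m : ℤ) : R) * (x ^ (n - wt v) * y ^ wt v) := by
      simp only [weightEnum, mul_sum, sum_mem_commSign, Int.cast_ite, Int.cast_natCast,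
        Int.cast_zero, ite_mul, zero_mul, ← sum_filter]
    _ = ∑ m with m ∈ W, ∑ v, (commSign v m : R) * (x ^ (n - wt v) * y ^ wt v) := by
      simp only [Int.cast_sum, sum_mul]
      exact sum_comm
    _ = weightEnum {m | m ∈ W} (x + 3 * y) (x - y) :=
      sum_congr rfl fun m _ => sum_commSign_mul_pow_wt x y m

end WeightEnumerator

section Coefficients

open Polynomial

lemma coeff_one_add_C_mul_X_pow {R : Type*} [CommSemiring R] (a : R) (k j : ℕ) :
    ((1 + C a * X) ^ k).coeff j = a ^ j * (k.choose j : R) := by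
  have eq_comp : (1 + C a * X) ^ k = ((1 + X) ^ k).comp (C a * X) := by simp
  rw [eq_comp, comp_C_mul_X_coeff, coeff_one_add_X_pow, mul_comm]

lemma coeff_one_add_pow_mul_one_sub_pow (n w k : ℕ) :
    ((1 + 3 * X : ℤ[X]) ^ (n - k) * (1 - X) ^ k).coeff w = kraw n w k := by
  have one_sub : (1 - X : ℤ[X]) = 1 + C (-1) * X := by simp [sub_eq_add_neg]
  have three_eq_C : (3 : ℤ[X]) = C 3 := rfl
  rw [mul_comm, one_sub, three_eq_C, coeff_mul, Nat.sum_antidiagonal_eq_sum_range_succ_mk, kraw]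
  simp only [coeff_one_add_C_mul_X_pow]
  exact sum_congr rfl fun u _ => by ring

lemma coeff_weightEnum_one_X {n : ℕ} {R : Type*} [CommSemiring R] (S : Finset (V n)) (k : ℕ) :
    (weightEnum S 1 (X : R[X])).coeff k = #{v ∈ S | wt v = k} := by
  simp [weightEnum, finsetSum_coeff, coeff_X_pow, eq_comm]

lemma coeff_weightEnum_one_add_one_sub {n : ℕ} (S : Finset (V n)) (w : ℕ) :
    (weightEnum S (1 + 3 * X) (1 - X : ℤ[X])).coeff w =
      ∑ k ∈ range (n + 1), kraw n w k * #{v ∈ S | wt v = k} := by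
  simp only [weightEnum_eq_sum_range, finsetSum_coeff, coeff_natCast_mul,
    coeff_one_add_pow_mul_one_sub_pow, mul_comm (kraw _ _ _)]

end Coefficients

/-- MacWilliams identity for EAQEC codes (coefficient form):
`|W| ⬝ B_w = ∑_{w'=0}^{n} P_w(w',n) ⬝ A_{w'}`. -/
theorem macwilliams_coeff (n : ℕ) (hn : 1 ≤ n) (W : Submodule (ZMod 2) (V n))
    (w : ℕ) (hw : w ≤ n) :
    ((Finset.univ.filter (fun m => m ∈ W)).card : ℤ) *
        ((Finset.univ.filter (fun v => v ∈ sdual W ∧ wt v = w)).card : ℤ) =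
      ∑ w' ∈ Finset.range (n + 1),
        kraw n w w' *
          ((Finset.univ.filter (fun v => v ∈ W ∧ wt v = w')).card : ℤ) := by
  have coeff_eq := congrArg (Polynomial.coeff · w)
    (card_mul_weightEnum_sdual W 1 (Polynomial.X : Polynomial ℤ))
  simpa only [Polynomial.coeff_natCast_mul, coeff_weightEnum_one_X,
    coeff_weightEnum_one_add_one_sub, filter_filter] using coeff_eq
end

section
/- (Entanglement-assisted repetition codes, odd length.) For every odd integer n ≥ 1, there exists an F₂-subspace S ⊆ V_n with dim S = 2(n−1) and S ∩ S^⊥ = {0} such that the minimum Pauli weight of a nonzero element of S^⊥ equals n; that is, a maximal-entanglement [[n,1,n;n−1]] EAQEC code exists. (Explicitly, S^⊥ is spanned by the all-X vector (1,…,1 | 0,…,0) and the all-Z vector (0,…,0 | 1,…,1).) -/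
open Finset

open scoped Classical

/-!
Let `L` be the span of the all-`X` and all-`Z` vectors. Their symplectic product is `n`, which is
`1` modulo `2` because `n` is odd: they form a hyperbolic pair, so `L` meets its symplectic dual
trivially. The code is `S = L^⊥`. As the symplectic form is nondegenerate and `L` is a plane,
`dim S = 2n - 2` and `S^⊥ = L`. A nonzero element of `L` has the same nonzero pair `(a, b)` at every
index, so its weight is `n`.
-/

lemma disjoint_span_pair_orthogonal_of_isAlt {R M : Type*} [CommRing R] [NoZeroDivisors R]
    [AddCommGroup M] [Module R M] {B : LinearMap.BilinForm R M} {u v : M} (hB : B.IsAlt)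
    (huv : B u v ≠ 0) :
    Disjoint (Submodule.span R {u, v}) (B.orthogonal (Submodule.span R {u, v})) := by
  refine Submodule.disjoint_def.2 fun w hw hw_orth => ?_
  obtain ⟨a, b, rfl⟩ := Submodule.mem_span_pair.1 hw
  have hu : B u (a • u + b • v) = 0 := hw_orth u (Submodule.subset_span (by simp))
  have hv : B v (a • u + b • v) = 0 := hw_orth v (Submodule.subset_span (by simp))
  have hvu : B v u ≠ 0 := mt hB.isRefl.eq_iff.1 huv
  have ha : a = 0 := by simpa [hB.self_eq_zero, hvu] using hv
  have hb : b = 0 := by simpa [hB.self_eq_zero, huv] using hu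
  simp [ha, hb]

section Symplectic

variable {n : ℕ}

lemma sympl_self (u : V n) : sympl u u = 0 :=
  Finset.sum_eq_zero fun i _ => by rw [mul_comm (u.2 i), CharTwo.add_self_eq_zero]

/-- The symplectic product as a bilinear form, giving access to the library's orthogonal
complements. -/
def symplForm (n : ℕ) : LinearMap.BilinForm (ZMod 2) (V n) :=
  LinearMap.mk₂ (ZMod 2) sympl sympl_add_left sympl_smul_left
    (fun u v w => by simp only [sympl_comm u, sympl_add_left])
    (fun c u v => by simp only [sympl_comm u, sympl_smul_left, smul_eq_mul])

lemma symplForm_apply (u v : V n) : symplForm n u v = sympl u v := rfl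

lemma symplForm_isAlt : (symplForm n).IsAlt := sympl_self

lemma sympl_single_zero (u : V n) (i : Fin n) : sympl u (Pi.single i 1, 0) = u.2 i := by
  simp [sympl, Pi.single_apply]

lemma sympl_zero_single (u : V n) (i : Fin n) : sympl u (0, Pi.single i 1) = u.1 i := by
  simp [sympl, Pi.single_apply]

lemma symplForm_nondegenerate : (symplForm n).Nondegenerate := by
  refine symplForm_isAlt.isRefl.nondegenerate_iff_separatingLeft.2 fun u hu => ?_
  ext i
  · exact (sympl_zero_single u i).symm.trans (hu _)
  · exact (sympl_single_zero u i).symm.trans (hu _)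

lemma sdual_eq_orthogonal (W : Submodule (ZMod 2) (V n)) :
    sdual W = (symplForm n).orthogonal W := by
  ext u
  exact forall₂_congr fun w _ => symplForm_isAlt.isRefl.eq_iff (x := u) (y := w)

lemma sdual_sdual (W : Submodule (ZMod 2) (V n)) : sdual (sdual W) = W := by
  simp only [sdual_eq_orthogonal, LinearMap.BilinForm.orthogonal_orthogonal
    symplForm_nondegenerate symplForm_isAlt.isRefl]

lemma finrank_sdual (W : Submodule (ZMod 2) (V n)) :
    Module.finrank (ZMod 2) (sdual W) = 2 * n - Module.finrank (ZMod 2) W := by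
  rw [sdual_eq_orthogonal, LinearMap.BilinForm.finrank_orthogonal symplForm_nondegenerate]
  simp [two_mul]

end Symplectic

section Repetition

variable {n : ℕ}

/-- The all-`X` vector `(1, …, 1 | 0, …, 0)`, the logical `X` of the repetition code. -/
def allX (n : ℕ) : V n := (fun _ => 1, fun _ => 0)

/-- The all-`Z` vector `(0, …, 0 | 1, …, 1)`, the logical `Z` of the repetition code. -/
def allZ (n : ℕ) : V n := (fun _ => 0, fun _ => 1)

/-- The logical group of the repetition code, to which the code itself is symplectically dual. -/
def repetitionLogicalGroup (n : ℕ) : Submodule (ZMod 2) (V n) :=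
  Submodule.span (ZMod 2) {allX n, allZ n}

lemma sympl_allX_allZ (n : ℕ) : sympl (allX n) (allZ n) = n := by
  simp [sympl, allX, allZ]

lemma linearIndependent_allX_allZ [NeZero n] : LinearIndependent (ZMod 2) ![allX n, allZ n] := by
  refine LinearIndependent.pair_iff.2 fun a b h => ⟨?_, ?_⟩
  · simpa [allX, allZ] using congrFun (congrArg Prod.fst h) 0
  · simpa [allX, allZ] using congrFun (congrArg Prod.snd h) 0

lemma finrank_repetitionLogicalGroup [NeZero n] :
    Module.finrank (ZMod 2) (repetitionLogicalGroup n) = 2 := by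
  rw [repetitionLogicalGroup, ← Matrix.range_cons_cons_empty (allX n) (allZ n) ![],
    finrank_span_eq_card linearIndependent_allX_allZ, Fintype.card_fin]

lemma disjoint_repetitionLogicalGroup_sdual (hodd : Odd n) :
    Disjoint (repetitionLogicalGroup n) (sdual (repetitionLogicalGroup n)) := by
  have hXZ : symplForm n (allX n) (allZ n) ≠ 0 := by
    rw [symplForm_apply, sympl_allX_allZ, ZMod.natCast_eq_one_iff_odd.2 hodd]
    exact one_ne_zero
  rw [sdual_eq_orthogonal]
  exact disjoint_span_pair_orthogonal_of_isAlt symplForm_isAlt hXZ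

lemma wt_smul_allX_add_smul_allZ {a b : ZMod 2} (h : ¬(a = 0 ∧ b = 0)) :
    wt (a • allX n + b • allZ n) = n := by
  simp [wt, allX, allZ, h]

lemma wt_eq_of_mem_repetitionLogicalGroup {v : V n} (hv : v ∈ repetitionLogicalGroup n)
    (hv0 : v ≠ 0) : wt v = n := by
  obtain ⟨a, b, rfl⟩ := Submodule.mem_span_pair.1 hv
  refine wt_smul_allX_add_smul_allZ ?_
  rintro ⟨rfl, rfl⟩
  simp at hv0

end Repetition

/-- For every odd `n ≥ 1` a maximal-entanglement `[[n,1,n;n−1]]` EAQEC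
code exists; explicitly, its logical group `S^⊥` is spanned by the all-`X` vector
and the all-`Z` vector. -/
theorem EA_repetition_code_odd (n : ℕ) (hn : 1 ≤ n) (hodd : Odd n) :
    ∃ S : Submodule (ZMod 2) (V n),
      Module.finrank (ZMod 2) S = 2 * (n - 1) ∧
      S ⊓ sdual S = ⊥ ∧
      sdual S = Submodule.span (ZMod 2)
        {(((fun _ => 1), (fun _ => 0)) : V n), (((fun _ => 0), (fun _ => 1)) : V n)} ∧
      (∀ v ∈ sdual S, v ≠ 0 → n ≤ wt v) ∧
      (∃ v ∈ sdual S, v ≠ 0 ∧ wt v = n) := by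
  have : NeZero n := ⟨Nat.one_le_iff_ne_zero.1 hn⟩
  have hX : allX n ∈ repetitionLogicalGroup n := Submodule.subset_span (by simp)
  have hX0 : allX n ≠ 0 := linearIndependent_allX_allZ.ne_zero 0
  refine ⟨sdual (repetitionLogicalGroup n), ?_, ?_⟩
  · rw [finrank_sdual, finrank_repetitionLogicalGroup, Nat.mul_sub_one]
  rw [sdual_sdual]
  exact ⟨(disjoint_repetitionLogicalGroup_sdual hodd).symm.eq_bot, rfl,
    fun v hv hv0 => (wt_eq_of_mem_repetitionLogicalGroup hv hv0).ge,
    allX n, hX, hX0, wt_eq_of_mem_repetitionLogicalGroup hX hX0⟩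
end

section
/- (Nonexistence of [[n,1,n;n−1]] EAQEC codes for even n.) Let n ≥ 2 be an even integer. Then there do not exist u, v ∈ V_n with λ(u,v) = 1 such that wt(u) = wt(v) = wt(u+v) = n. Consequently, no maximal-entanglement [[n,1,n;n−1]] EAQEC code exists for even n. -/
open Finset

open scoped Classical

/-!
Modulo 2 the Pauli weight is the quadratic form `∑ i, (x i ^ 2 + x i * z i + z i ^ 2)`, and its
polar form is the symplectic product. So `λ(u, v)` is the parity of `wt u + wt v + wt (u + v)`,
which is `3 * n`, hence even, when all three weights equal an even `n`.
-/

lemma ite_ne_zero_eq_sq_add_mul_add_sq (x z : ZMod 2) :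
    (if ¬(x = 0 ∧ z = 0) then 1 else 0 : ZMod 2) = x ^ 2 + x * z + z ^ 2 := by
  decide +revert

lemma natCast_wt_eq_sum {n : ℕ} (v : V n) :
    (wt v : ZMod 2) = ∑ i, (v.1 i ^ 2 + v.1 i * v.2 i + v.2 i ^ 2) := by
  simp only [wt, natCast_card_filter, ite_ne_zero_eq_sq_add_mul_add_sq]

lemma natCast_wt_add {n : ℕ} (u v : V n) :
    (wt (u + v) : ZMod 2) = wt u + wt v + sympl u v := by
  simp only [natCast_wt_eq_sum, sympl, ← sum_add_distrib, Prod.fst_add, Prod.snd_add, Pi.add_apply]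
  refine sum_congr rfl fun i _ => ?_
  rw [CharTwo.add_sq, CharTwo.add_sq]
  ring

lemma sympl_eq_natCast_wt_add_wt_add_wt {n : ℕ} (u v : V n) :
    sympl u v = (wt u + wt v + wt (u + v) : ℕ) := by
  push_cast
  rw [natCast_wt_add, CharTwo.add_cancel_left]

theorem no_even_length_EA_repetition_general (n : ℕ) :
    ¬ ∃ u v : V n, sympl u v = 1 ∧ Even (wt u + wt v + wt (u + v)) := by
  rintro ⟨u, v, hsympl, heven⟩
  have hzero : sympl u v = 0 := by
    rw [sympl_eq_natCast_wt_add_wt_add_wt, ZMod.natCast_eq_zero_iff_even.mpr heven]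
  exact one_ne_zero (hsympl.symm.trans hzero)

/-- For even `n` there are no `u, v ∈ V n` with `λ(u,v) = 1` and
`wt u = wt v = wt (u+v) = n`; hence no maximal-entanglement `[[n,1,n;n−1]]` EAQEC
code exists for even `n`. -/
theorem no_even_length_EA_repetition (n : ℕ) (hn : 2 ≤ n) (heven : Even n) :
    ¬ ∃ u v : V n, sympl u v = 1 ∧ wt u = n ∧ wt v = n ∧ wt (u + v) = n := by
  rintro ⟨u, v, hsympl, hu, hv, huv⟩
  refine no_even_length_EA_repetition_general n ⟨u, v, hsympl, ?_⟩
  simpa only [hu, hv, huv] using (heven.add heven).add heven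
end

section
/- (Nonexistence of [[n,n−1,2;1]] EAQEC codes for even n.) Let n ≥ 2 be an even integer. Then there do not exist u, v ∈ V_n with λ(u,v) = 1 such that every nonzero element of (span{u,v})^⊥ has Pauli weight at least 2. Consequently, no maximal-entanglement [[n,n−1,2;1]] EAQEC code exists for even n. -/
open Finset

open scoped Classical

/-!
A Pauli operator of weight one, supported on qubit `i`, lies in `(span {u, v})^⊥` iff its two
coordinates solve a homogeneous `2 × 2` linear system whose determinant is the contribution of
qubit `i` to `λ(u, v)`. If the dual has minimum distance at least two, every one of these systems
is nonsingular, so each of the `n` contributions equals `1` and `λ(u, v) = n` in `ZMod 2`.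
-/

section

variable {n : ℕ}

lemma mem_sdual_span {s : Set (V n)} {w : V n} :
    w ∈ sdual (Submodule.span (ZMod 2) s) ↔ ∀ x ∈ s, sympl w x = 0 := by
  refine ⟨fun hw x hx => hw x (Submodule.subset_span hx), fun hw x hx => ?_⟩
  induction hx using Submodule.span_induction with
  | mem x hx => exact hw x hx
  | zero => simp [sympl]
  | add x y _ _ hx hy =>
    rw [sympl_comm, sympl_add_left, sympl_comm x, sympl_comm y, hx, hy, add_zero]
  | smul c x _ hx => rw [sympl_comm, sympl_smul_left, sympl_comm x, hx, mul_zero]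

lemma mem_sdual_span_pair {u v w : V n} :
    w ∈ sdual (Submodule.span (ZMod 2) {u, v}) ↔ sympl w u = 0 ∧ sympl w v = 0 := by
  simp [mem_sdual_span]

/-- The contribution of qubit `i` to the symplectic product `λ(u, v)`: it is `1` iff the tensor
factors of `u` and `v` at qubit `i` anticommute. -/
def localSympl (u v : V n) (i : Fin n) : ZMod 2 :=
  u.1 i * v.2 i + u.2 i * v.1 i

lemma sympl_eq_sum_localSympl (u v : V n) : sympl u v = ∑ i, localSympl u v i :=
  rfl

/-- The Pauli operator acting as `(p, q)` on qubit `i` and as the identity on all other qubits;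
these are the candidates for elements of weight one in a symplectic dual. -/
def singleQubit (i : Fin n) (p q : ZMod 2) : V n :=
  (Pi.single i p, Pi.single i q)

lemma singleQubit_eq_zero_iff {i : Fin n} {p q : ZMod 2} :
    singleQubit i p q = 0 ↔ p = 0 ∧ q = 0 := by
  simp [singleQubit, Prod.ext_iff]

lemma wt_singleQubit_le_one (i : Fin n) (p q : ZMod 2) : wt (singleQubit i p q) ≤ 1 := by
  have hsupp : (Finset.univ.filter fun j =>
      ¬((singleQubit i p q).1 j = 0 ∧ (singleQubit i p q).2 j = 0)) ⊆ {i} := by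
    intro j hj
    by_contra hji
    simp_all [singleQubit]
  exact (Finset.card_le_card hsupp).trans_eq (Finset.card_singleton i)

lemma sympl_singleQubit (i : Fin n) (p q : ZMod 2) (w : V n) :
    sympl (singleQubit i p q) w = p * w.2 i + q * w.1 i := by
  simp [sympl, singleQubit, Finset.sum_add_distrib, Pi.single_apply]

lemma exists_singleQubit_mem_sdual_of_localSympl_eq_zero {u v : V n} {i : Fin n}
    (hi : localSympl u v i = 0) :
    ∃ p q, singleQubit i p q ≠ 0 ∧
      singleQubit i p q ∈ sdual (Submodule.span (ZMod 2) {u, v}) := by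
  have hdet : !![u.2 i, u.1 i; v.2 i, v.1 i].det = 0 := by
    rw [Matrix.det_fin_two_of, CharTwo.sub_eq_add, add_comm]
    exact hi
  obtain ⟨x, hx, hker⟩ := Matrix.exists_mulVec_eq_zero_iff.2 hdet
  refine ⟨x 0, x 1, fun h => hx ?_, mem_sdual_span_pair.2 ⟨?_, ?_⟩⟩
  · ext k
    fin_cases k
    exacts [(singleQubit_eq_zero_iff.1 h).1, (singleQubit_eq_zero_iff.1 h).2]
  · simpa [sympl_singleQubit, Matrix.mulVec, dotProduct, mul_comm] using congrFun hker 0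
  · simpa [sympl_singleQubit, Matrix.mulVec, dotProduct, mul_comm] using congrFun hker 1

lemma localSympl_eq_one_of_two_le_wt {u v : V n}
    (h : ∀ w ∈ sdual (Submodule.span (ZMod 2) {u, v}), w ≠ 0 → 2 ≤ wt w) (i : Fin n) :
    localSympl u v i = 1 := by
  refine Fin.eq_one_of_ne_zero _ fun hi => ?_
  obtain ⟨p, q, hne, hmem⟩ := exists_singleQubit_mem_sdual_of_localSympl_eq_zero hi
  exact absurd ((h _ hmem hne).trans (wt_singleQubit_le_one i p q)) (by decide)

lemma sympl_eq_natCast_of_two_le_wt {u v : V n}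
    (h : ∀ w ∈ sdual (Submodule.span (ZMod 2) {u, v}), w ≠ 0 → 2 ≤ wt w) :
    sympl u v = n := by
  simp [sympl_eq_sum_localSympl, localSympl_eq_one_of_two_le_wt h]

end

/-- For even `n` there are no `u, v ∈ V n` with `λ(u,v) = 1` such that
every nonzero element of `(span {u,v})^⊥` has Pauli weight at least `2`; hence no
maximal-entanglement `[[n,n−1,2;1]]` EAQEC code exists for even `n`. -/
theorem no_even_length_EA_accumulator (n : ℕ) (hn : 2 ≤ n) (heven : Even n) :
    ¬ ∃ u v : V n, sympl u v = 1 ∧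
      ∀ w ∈ sdual (Submodule.span (ZMod 2) {u, v}), w ≠ 0 → 2 ≤ wt w := by
  rintro ⟨u, v, huv, h⟩
  have hodd : (n : ZMod 2) = 1 := (sympl_eq_natCast_of_two_le_wt h).symm.trans huv
  exact Nat.not_even_iff_odd.2 (ZMod.natCast_eq_one_iff_odd.1 hodd) heven
end

section
/- (Lengthening an EAQEC code.) Let n, k, c, d be integers with n ≥ 1, and suppose S ⊆ V_n is an F₂-subspace with dim S = n−k+c, dim(S ∩ S^⊥) = n−k−c, and every element of S^⊥ \ (S ∩ S^⊥) has Pauli weight at least d. Then there exists an F₂-subspace S' ⊆ V_{n+1} with dim S' = (n+1)−k+(c+1), dim(S' ∩ S'^⊥) = (n+1)−k−(c+1), and every element of S'^⊥ \ (S' ∩ S'^⊥) has Pauli weight at least d. That is, the existence of an [[n,k,d;c]] EAQEC code implies the existence of an [[n+1,k,d;c+1]] EAQEC code. -/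
open Finset

open scoped Classical

/-!
Take `S' = S ⊕ V 1`, adjoining to `S` every Pauli operator on the new qubit. Duals of orthogonal
direct sums are formed summand by summand and `V 1` is nondegenerate, so `S'^⊥ = S^⊥ ⊕ 0`, and the
radical of `S'` is the radical of `S` padded by `0`. Hence `dim S` grows by two, the dimension of
the radical does not change, and padding by the identity on the new qubit preserves weights.
-/

namespace V

variable {m n : ℕ}

/-- Concatenation of Pauli operators modulo phases, i.e. the tensor product of an operator on `m`
qubits with one on `n` qubits. The `x`- and `z`-parts are appended separately. -/
def appendEquiv (m n : ℕ) : (V m × V n) ≃ₗ[ZMod 2] V (m + n) where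
  toFun p := (Fin.append p.1.1 p.2.1, Fin.append p.1.2 p.2.2)
  invFun v := ((fun i => v.1 (Fin.castAdd n i), fun i => v.2 (Fin.castAdd n i)),
    (fun i => v.1 (Fin.natAdd m i), fun i => v.2 (Fin.natAdd m i)))
  map_add' p q := by
    ext i <;> refine Fin.addCases (fun j => ?_) (fun j => ?_) i <;> simp
  map_smul' a p := by
    ext i <;> refine Fin.addCases (fun j => ?_) (fun j => ?_) i <;> simp
  left_inv p := by simp
  right_inv _ := Prod.ext Fin.append_castAdd_natAdd Fin.append_castAdd_natAdd

lemma sympl_appendEquiv (p q : V m × V n) :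
    sympl (appendEquiv m n p) (appendEquiv m n q) = sympl p.1 q.1 + sympl p.2 q.2 := by
  simp [sympl, appendEquiv, Fin.sum_univ_add]

lemma wt_appendEquiv (p : V m × V n) : wt (appendEquiv m n p) = wt p.1 + wt p.2 := by
  simp only [wt, Finset.card_filter, Fin.sum_univ_add]
  simp [appendEquiv]

lemma sympl_zero_right (u : V n) : sympl u 0 = 0 := by
  simp [sympl]

lemma wt_zero : wt (0 : V n) = 0 := by
  simp [wt]

lemma mem_sdual {W : Submodule (ZMod 2) (V n)} {u : V n} :
    u ∈ sdual W ↔ ∀ w ∈ W, sympl u w = 0 :=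
  Iff.rfl

lemma sdual_top : sdual (⊤ : Submodule (ZMod 2) (V n)) = ⊥ := by
  refine (Submodule.eq_bot_iff _).2 fun u hu => ?_
  ext i
  · simpa [sympl, Pi.single_apply] using hu (0, Pi.single i 1) trivial
  · simpa [sympl, Pi.single_apply] using hu (Pi.single i 1, 0) trivial

/-- The orthogonal direct sum of a space of Pauli operators on `m` qubits and one on `n` qubits,
realized as a space of Pauli operators on `m + n` qubits. -/
def directSum (P : Submodule (ZMod 2) (V m)) (Q : Submodule (ZMod 2) (V n)) :
    Submodule (ZMod 2) (V (m + n)) :=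
  (P.prod Q).map (appendEquiv m n : V m × V n →ₗ[ZMod 2] V (m + n))

lemma appendEquiv_mem_directSum {P : Submodule (ZMod 2) (V m)} {Q : Submodule (ZMod 2) (V n)}
    {p : V m × V n} : appendEquiv m n p ∈ directSum P Q ↔ p.1 ∈ P ∧ p.2 ∈ Q := by
  simp [directSum, Submodule.mem_map_equiv]

lemma finrank_directSum (P : Submodule (ZMod 2) (V m)) (Q : Submodule (ZMod 2) (V n)) :
    Module.finrank (ZMod 2) (directSum P Q) =
      Module.finrank (ZMod 2) P + Module.finrank (ZMod 2) Q := by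
  have range_prodMap : LinearMap.range (P.subtype.prodMap Q.subtype) = P.prod Q := by
    simp [LinearMap.range_prodMap]
  rw [directSum, LinearEquiv.finrank_map_eq, ← range_prodMap,
    LinearMap.finrank_range_of_inj (P.injective_subtype.prodMap Q.injective_subtype),
    Module.finrank_prod]

lemma directSum_inf_directSum (P P' : Submodule (ZMod 2) (V m))
    (Q Q' : Submodule (ZMod 2) (V n)) :
    directSum P Q ⊓ directSum P' Q' = directSum (P ⊓ P') (Q ⊓ Q') := by
  rw [directSum, directSum, ← Submodule.map_inf _ (appendEquiv m n).injective,
    Submodule.prod_inf_prod, directSum]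

lemma sdual_directSum (P : Submodule (ZMod 2) (V m)) (Q : Submodule (ZMod 2) (V n)) :
    sdual (directSum P Q) = directSum (sdual P) (sdual Q) := by
  ext v
  obtain ⟨p, rfl⟩ := (appendEquiv m n).surjective v
  simp only [appendEquiv_mem_directSum, mem_sdual, (appendEquiv m n).surjective.forall,
    sympl_appendEquiv]
  constructor
  · intro h
    exact ⟨fun u hu => by simpa [sympl_zero_right] using h (u, 0) ⟨hu, Q.zero_mem⟩,
      fun w hw => by simpa [sympl_zero_right] using h (0, w) ⟨P.zero_mem, hw⟩⟩
  · rintro ⟨hP, hQ⟩ q ⟨hq₁, hq₂⟩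
    rw [hP _ hq₁, hQ _ hq₂, add_zero]

lemma sdual_directSum_top (S : Submodule (ZMod 2) (V n)) :
    sdual (directSum S (⊤ : Submodule (ZMod 2) (V m))) = directSum (sdual S) ⊥ := by
  rw [sdual_directSum, sdual_top]

lemma directSum_top_inf_sdual (S : Submodule (ZMod 2) (V n)) :
    directSum S (⊤ : Submodule (ZMod 2) (V m)) ⊓ sdual (directSum S ⊤) =
      directSum (S ⊓ sdual S) ⊥ := by
  rw [sdual_directSum_top, directSum_inf_directSum, inf_bot_eq]

lemma exists_wt_eq_of_mem_directSum_bot {P : Submodule (ZMod 2) (V n)} {v : V (n + m)}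
    (hv : v ∈ directSum P (⊥ : Submodule (ZMod 2) (V m))) :
    ∃ u ∈ P, v = appendEquiv n m (u, 0) ∧ wt v = wt u := by
  obtain ⟨⟨u, w⟩, ⟨hu, rfl : w = 0⟩, rfl⟩ := hv
  exact ⟨u, hu, rfl, by simp [wt_appendEquiv, wt_zero]⟩

end V

/-- Lengthening an EAQEC code: an `[[n,k,d;c]]` EAQEC code yields an
`[[n+1,k,d;c+1]]` EAQEC code. -/
theorem EAQEC_lengthening (n k c d : ℕ) (hn : 1 ≤ n)
    (S : Submodule (ZMod 2) (V n))
    (hdim : Module.finrank (ZMod 2) S + k = n + c)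
    (hrad : Module.finrank (ZMod 2) (S ⊓ sdual S : Submodule (ZMod 2) (V n)) + k + c = n)
    (hdist : ∀ v ∈ sdual S, v ∉ (S ⊓ sdual S : Submodule (ZMod 2) (V n)) → d ≤ wt v) :
    ∃ S' : Submodule (ZMod 2) (V (n + 1)),
      Module.finrank (ZMod 2) S' + k = (n + 1) + (c + 1) ∧
      Module.finrank (ZMod 2) (S' ⊓ sdual S' : Submodule (ZMod 2) (V (n + 1))) + k + (c + 1)
        = n + 1 ∧
      ∀ v ∈ sdual S', v ∉ (S' ⊓ sdual S' : Submodule (ZMod 2) (V (n + 1))) → d ≤ wt v := by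
  refine ⟨V.directSum S (⊤ : Submodule (ZMod 2) (V 1)), ?_, ?_, ?_⟩
  · rw [V.finrank_directSum, finrank_top, Module.finrank_prod, Module.finrank_fin_fun]
    omega
  · rw [V.directSum_top_inf_sdual, V.finrank_directSum, finrank_bot]
    omega
  · rw [V.directSum_top_inf_sdual, V.sdual_directSum_top]
    intro v hv hv_rad
    obtain ⟨u, hu, rfl, hwt⟩ := V.exists_wt_eq_of_mem_directSum_bot hv
    rw [hwt]
    refine hdist u hu fun hu_rad => hv_rad ?_
    exact V.appendEquiv_mem_directSum.2 ⟨hu_rad, Submodule.zero_mem _⟩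
end

section
/- (Plotkin bound, additive-code form.) Let n ≥ 1 and let G be a subgroup of the additive group V_n = (ZMod 2)^n × (ZMod 2)^n with M = |G| ≥ 2, and let d ≥ 0 be an integer such that every nonzero element of G has Pauli weight at least d. Then 4·(M−1)·d ≤ 3·n·M. -/
open Finset

open scoped Classical

/-!
Sum the Hamming distance over all ordered pairs of codewords. Each pair of distinct codewords
contributes at least `d`. On the other hand, in a fixed coordinate the codewords are distributed
over `q` letters, and by Cauchy–Schwarz at least a fraction `1 / q` of the pairs agree there.
-/

section PlotkinBound

variable {ι κ A : Type*} [Fintype ι] [Fintype κ] [DecidableEq A]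

lemma sum_hammingDist_eq_sum_card_filter_ne (u v : κ → ι → A) :
    ∑ k, hammingDist (u k) (v k) = ∑ i, #{k | u k i ≠ v k i} := by
  simp only [hammingDist, card_filter]
  exact sum_comm

lemma card_mul_pred_mul_le_sum_hammingDist (c : κ → ι → A) {d : ℕ}
    (hd : Pairwise fun x y => d ≤ hammingDist (c x) (c y)) :
    Fintype.card κ * (Fintype.card κ - 1) * d ≤
      ∑ p : κ × κ, hammingDist (c p.1) (c p.2) := by
  calc Fintype.card κ * (Fintype.card κ - 1) * d
      = ∑ _p ∈ (univ : Finset κ).offDiag, d := by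
        rw [sum_const, offDiag_card, card_univ, smul_eq_mul, Nat.mul_sub_one]
    _ ≤ ∑ p ∈ (univ : Finset κ).offDiag, hammingDist (c p.1) (c p.2) :=
        sum_le_sum fun _ hp => hd (mem_offDiag.mp hp).2.2
    _ ≤ ∑ p : κ × κ, hammingDist (c p.1) (c p.2) := sum_le_sum_of_subset (subset_univ _)

variable [Fintype A]

lemma card_filter_apply_eq_apply_eq_sum_sq (f : κ → A) :
    #{p : κ × κ | f p.1 = f p.2} = ∑ a, #{x | f x = a} ^ 2 := by
  rw [card_eq_sum_card_fiberwise (f := fun p => f p.1) (t := univ) fun _ _ => mem_univ _]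
  refine sum_congr rfl fun a _ => ?_
  rw [sq, ← card_product]
  congr 1
  grind

lemma card_sq_le_card_mul_card_filter_apply_eq_apply (f : κ → A) :
    Fintype.card κ ^ 2 ≤ Fintype.card A * #{p : κ × κ | f p.1 = f p.2} := by
  calc Fintype.card κ ^ 2 = (∑ a, #{x | f x = a}) ^ 2 := by
        rw [← card_eq_sum_card_fiberwise fun _ _ => mem_univ _, card_univ]
    _ ≤ Fintype.card A * ∑ a, #{x | f x = a} ^ 2 := sq_sum_le_card_mul_sum_sq
    _ = Fintype.card A * #{p : κ × κ | f p.1 = f p.2} := by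
        rw [card_filter_apply_eq_apply_eq_sum_sq]

lemma card_mul_card_filter_apply_ne_apply_le (f : κ → A) :
    Fintype.card A * #{p : κ × κ | f p.1 ≠ f p.2} ≤
      (Fintype.card A - 1) * Fintype.card κ ^ 2 := by
  have eq_add_ne : #{p : κ × κ | f p.1 = f p.2} + #{p : κ × κ | f p.1 ≠ f p.2} =
      Fintype.card κ ^ 2 := by
    rw [card_filter_add_card_filter_not, card_univ, Fintype.card_prod, sq]
  rw [Nat.sub_one_mul]
  apply Nat.le_sub_of_add_le'
  calc Fintype.card κ ^ 2 + Fintype.card A * #{p : κ × κ | f p.1 ≠ f p.2}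
      ≤ Fintype.card A * #{p : κ × κ | f p.1 = f p.2} +
          Fintype.card A * #{p : κ × κ | f p.1 ≠ f p.2} :=
        Nat.add_le_add_right (card_sq_le_card_mul_card_filter_apply_eq_apply f) _
    _ = Fintype.card A * Fintype.card κ ^ 2 := by rw [← mul_add, eq_add_ne]

lemma card_mul_sum_hammingDist_le (c : κ → ι → A) :
    Fintype.card A * ∑ p : κ × κ, hammingDist (c p.1) (c p.2) ≤
      (Fintype.card A - 1) * Fintype.card ι * Fintype.card κ ^ 2 := by
  calc Fintype.card A * ∑ p : κ × κ, hammingDist (c p.1) (c p.2)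
      = ∑ i, Fintype.card A * #{p : κ × κ | c p.1 i ≠ c p.2 i} := by
        rw [sum_hammingDist_eq_sum_card_filter_ne, mul_sum]
    _ ≤ ∑ _i : ι, (Fintype.card A - 1) * Fintype.card κ ^ 2 :=
        sum_le_sum fun i _ => card_mul_card_filter_apply_ne_apply_le fun x => c x i
    _ = (Fintype.card A - 1) * Fintype.card ι * Fintype.card κ ^ 2 := by
        rw [sum_const, card_univ, smul_eq_mul]
        ring

theorem plotkin_bound_additive_general (c : κ → ι → A) {d : ℕ}
    (hd : Pairwise fun x y => d ≤ hammingDist (c x) (c y)) :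
    Fintype.card A * (Fintype.card κ - 1) * d ≤
      (Fintype.card A - 1) * Fintype.card ι * Fintype.card κ := by
  obtain hκ | hκ := (Fintype.card κ).eq_zero_or_pos
  · simp [hκ]
  refine Nat.le_of_mul_le_mul_left ?_ hκ
  calc Fintype.card κ * (Fintype.card A * (Fintype.card κ - 1) * d)
      = Fintype.card A * (Fintype.card κ * (Fintype.card κ - 1) * d) := by ring
    _ ≤ Fintype.card A * ∑ p : κ × κ, hammingDist (c p.1) (c p.2) :=
        Nat.mul_le_mul_left _ (card_mul_pred_mul_le_sum_hammingDist c hd)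
    _ ≤ (Fintype.card A - 1) * Fintype.card ι * Fintype.card κ ^ 2 :=
        card_mul_sum_hammingDist_le c
    _ = Fintype.card κ * ((Fintype.card A - 1) * Fintype.card ι * Fintype.card κ) := by ring

end PlotkinBound

/-- The word over the four-letter alphabet `ZMod 2 × ZMod 2` of single-qubit Pauli operators spelled
by `v = (x, z)`; it turns subsets of `V n` into quaternary codes of length `n`. -/
def pauliWord {n : ℕ} (v : V n) : Fin n → ZMod 2 × ZMod 2 := fun i => (v.1 i, v.2 i)

lemma hammingDist_pauliWord {n : ℕ} (u v : V n) :
    hammingDist (pauliWord u) (pauliWord v) = wt (u - v) := by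
  simp [hammingDist, pauliWord, wt, sub_eq_zero]

lemma pairwise_le_hammingDist_pauliWord {n : ℕ} {G : AddSubgroup (V n)} {d : ℕ}
    (hd : ∀ g ∈ G, g ≠ 0 → d ≤ wt g) :
    Pairwise fun g h : G => d ≤ hammingDist (pauliWord (g : V n)) (pauliWord (h : V n)) := by
  intro g h hgh
  rw [hammingDist_pauliWord]
  exact hd _ (G.sub_mem g.2 h.2) (sub_ne_zero.mpr (Subtype.coe_ne_coe.mpr hgh))

/-- Plotkin bound, additive-code form: if every nonzero element of a
subgroup `G ≤ V n` of order `M ≥ 2` has Pauli weight at least `d`, then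
`4(M−1)d ≤ 3nM`. -/
theorem plotkin_bound_additive (n : ℕ) (hn : 1 ≤ n) (G : AddSubgroup (V n))
    (hM : 2 ≤ Nat.card G) (d : ℕ)
    (hd : ∀ g ∈ G, g ≠ 0 → d ≤ wt g) :
    4 * (Nat.card G - 1) * d ≤ 3 * n * Nat.card G := by
  simpa using plotkin_bound_additive_general (fun g : G => pauliWord (g : V n))
    (pairwise_le_hammingDist_pauliWord hd)
end
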